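/- Let ρ ∈ (−1, 1), let f_ρ(z₁, z₂) = (1/(2π√(1−ρ²)))·exp(−(z₁² − 2ρz₁z₂ + z₂²)/(2(1−ρ²))) be the standard bivariate Gaussian density with correlation ρ, let φ(z) = (1/√(2π))·exp(−z²/2) and Φ(z) = ∫_{−∞}^z φ(t) dt. Fix real numbers a, b and set A = (b − ρa)/√(1−ρ²), B = (a − ρb)/√(1−ρ²), and Ω_{a,b} = ∫_a^∞ ∫_b^∞ f_ρ(z₁, z₂) dz₂ dz₁. Then ∫_a^∞ ∫_b^∞ z₁·z₂·f_ρ(z₁, z₂) dz₂ dz₁ = ρ·( a·φ(a)·(1 − Φ(A)) + b·φ(b)·(1 − Φ(B)) + Ω_{a,b} ) + (1 − ρ²)·f_ρ(a, b). -/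

import Mathlib

open Real

/-- The standard Gaussian probability density function. -/
noncomputable def stdGaussPDF (z : ℝ) : ℝ :=
  (1 / Real.sqrt (2 * Real.pi)) * Real.exp (-z ^ 2 / 2)

/-- The standard Gaussian cumulative distribution function. -/
noncomputable def stdGaussCDF (z : ℝ) : ℝ :=
  ∫ t in Set.Iic z, stdGaussPDF t

/-- The standard bivariate Gaussian density with correlation `ρ`. -/
noncomputable def bivGaussPDF (ρ z₁ z₂ : ℝ) : ℝ :=
  (1 / (2 * Real.pi * Real.sqrt (1 - ρ ^ 2))) *
    Real.exp (-(z₁ ^ 2 - 2 * ρ * z₁ * z₂ + z₂ ^ 2) / (2 * (1 - ρ ^ 2)))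

/-!
Given `Z₁ = x`, the variable `Z₂` has law `N(ρ x, 1 - ρ²)`. Write `T x` for the conditional
probability that `Z₂ > b`. Integrating by parts against a density `p` of `N(μ, v)` gives Stein's
identity `∫_a^∞ (x - μ) g p = v (g(a) p(a) + ∫_a^∞ g' p)`. With `g = 1` it evaluates the inner
integral and turns the cross moment into `ρ ∫_a^∞ x² φ(x) T(x) + (1 - ρ²) M`, where
`M = ∫_a^∞ x f_ρ(x, b)`. Since `T'(x)` is `ρ` times the conditional density at `b`, the choice
`g(x) = x T(x)` gives `∫_a^∞ x² φ T = a φ(a) T(a) + Ω_{a,b} + ρ M`. The coefficients of `M` add up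
to `1`, and, by the symmetry of `f_ρ`, `M` is itself a half-line first moment of a Gaussian, the
conditional law of `Z₁` given `Z₂ = b`.
-/

open MeasureTheory ProbabilityTheory Filter Topology Set
open scoped NNReal

lemma hasDerivAt_gaussianPDFReal (μ : ℝ) (v : ℝ≥0) (x : ℝ) :
    HasDerivAt (gaussianPDFReal μ v) (-((x - μ) / v) * gaussianPDFReal μ v x) x := by
  have hexponent : HasDerivAt (fun x : ℝ => -(x - μ) ^ 2 / (2 * v)) (-((x - μ) / v)) x :=
    ((((hasDerivAt_id x).sub_const μ).pow 2).neg.div_const _).congr_deriv (by simp; ring)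
  refine (hexponent.exp.const_mul (√(2 * π * v))⁻¹).congr_deriv ?_
  rw [gaussianPDFReal]
  ring

lemma continuous_gaussianPDFReal (μ : ℝ) (v : ℝ≥0) : Continuous (gaussianPDFReal μ v) :=
  continuous_iff_continuousAt.mpr fun x => (hasDerivAt_gaussianPDFReal μ v x).continuousAt

lemma gaussianPDFReal_le (μ : ℝ) (v : ℝ≥0) (x : ℝ) :
    gaussianPDFReal μ v x ≤ (√(2 * π * v))⁻¹ := by
  refine mul_le_of_le_one_right (by positivity) (exp_le_one_iff.mpr ?_)
  exact div_nonpos_of_nonpos_of_nonneg (neg_nonpos.mpr (sq_nonneg _)) (by positivity)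

lemma integrable_pow_mul_gaussianPDFReal (μ : ℝ) (v : ℝ≥0) (n : ℕ) :
    Integrable fun x => x ^ n * gaussianPDFReal μ v x := by
  rcases eq_or_ne v 0 with rfl | hv
  · simp
  have h : Integrable (fun x => x ^ n) (gaussianReal μ v) :=
    (memLp_id_gaussianReal' n (ENNReal.natCast_ne_top n)).integrable_norm_pow'.mono
      (by fun_prop) (by simp)
  rw [gaussianReal_of_var_ne_zero μ hv, integrable_withDensity_iff (measurable_gaussianPDF μ v)
    (ae_of_all _ fun _ => gaussianPDF_lt_top)] at h
  simpa only [toReal_gaussianPDF] using h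

lemma integral_Ioi_gaussianPDFReal_stein (μ : ℝ) {v : ℝ≥0} (hv : v ≠ 0) {a : ℝ}
    {g g' : ℝ → ℝ} (hg : ∀ x ∈ Ici a, HasDerivAt g (g' x) x)
    (hint : IntegrableOn (fun x => g x * gaussianPDFReal μ v x) (Ioi a))
    (hint_sub : IntegrableOn (fun x => (x - μ) * g x * gaussianPDFReal μ v x) (Ioi a))
    (hint_deriv : IntegrableOn (fun x => g' x * gaussianPDFReal μ v x) (Ioi a)) :
    ∫ x in Ioi a, (x - μ) * g x * gaussianPDFReal μ v x =
      v * (g a * gaussianPDFReal μ v a + ∫ x in Ioi a, g' x * gaussianPDFReal μ v x) := by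
  have hv' : (v : ℝ) ≠ 0 := NNReal.coe_ne_zero.mpr hv
  have hderiv : ∀ x ∈ Ici a, HasDerivAt (fun x => v * (g x * gaussianPDFReal μ v x))
      (v * (g' x * gaussianPDFReal μ v x) - (x - μ) * g x * gaussianPDFReal μ v x) x := by
    intro x hx
    refine (((hg x hx).mul (hasDerivAt_gaussianPDFReal μ v x)).const_mul (v : ℝ)).congr_deriv ?_
    field_simp
    ring
  have hint_total := (hint_deriv.const_mul (v : ℝ)).sub hint_sub
  have hlim := tendsto_zero_of_hasDerivAt_of_integrableOn_Ioi
    (fun x hx => hderiv x (Ioi_subset_Ici_self hx)) hint_total (hint.const_mul (v : ℝ))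
  have hFTC := integral_Ioi_of_hasDerivAt_of_tendsto' hderiv hint_total hlim
  rw [integral_sub (hint_deriv.const_mul (v : ℝ)) hint_sub, integral_const_mul] at hFTC
  linarith

lemma stdGaussPDF_eq_gaussianPDFReal : stdGaussPDF = gaussianPDFReal 0 1 := by
  ext z
  simp [stdGaussPDF, gaussianPDFReal]

lemma stdGaussCDF_eq_cdf : stdGaussCDF = cdf (gaussianReal 0 1) := by
  ext z
  rw [cdf_eq_real, measureReal_def, gaussianReal_apply_eq_integral 0 one_ne_zero,
    ENNReal.toReal_ofReal (integral_nonneg (gaussianPDFReal_nonneg 0 1)), stdGaussCDF,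
    stdGaussPDF_eq_gaussianPDFReal]

lemma hasDerivAt_stdGaussCDF (z : ℝ) : HasDerivAt stdGaussCDF (stdGaussPDF z) z := by
  have hcont : Continuous stdGaussPDF :=
    stdGaussPDF_eq_gaussianPDFReal ▸ continuous_gaussianPDFReal 0 1
  have hint : Integrable stdGaussPDF :=
    stdGaussPDF_eq_gaussianPDFReal ▸ integrable_gaussianPDFReal 0 1
  have hsplit : stdGaussCDF = fun z => (∫ t in (0 : ℝ)..z, stdGaussPDF t) + stdGaussCDF 0 := by
    ext z
    rw [← intervalIntegral.integral_Iic_sub_Iic hint.integrableOn hint.integrableOn]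
    simp [stdGaussCDF]
  rw [hsplit]
  exact (hcont.integral_hasStrictDerivAt 0 z).hasDerivAt.add_const _

lemma stdGaussPDF_div_sqrt (μ : ℝ) (v : ℝ≥0) (x : ℝ) :
    stdGaussPDF ((x - μ) / √v) / √v = gaussianPDFReal μ v x := by
  rw [stdGaussPDF, gaussianPDFReal, sqrt_mul (by positivity) (v : ℝ), div_pow,
    sq_sqrt v.coe_nonneg]
  ring_nf

lemma integral_Ioi_gaussianPDFReal (μ : ℝ) {v : ℝ≥0} (hv : v ≠ 0) (b : ℝ) :
    ∫ y in Ioi b, gaussianPDFReal μ v y = 1 - stdGaussCDF ((b - μ) / √v) := by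
  have hderiv (y : ℝ) :
      HasDerivAt (fun y => stdGaussCDF ((y - μ) / √v)) (gaussianPDFReal μ v y) y := by
    refine ((hasDerivAt_stdGaussCDF _).comp y
      (((hasDerivAt_id y).sub_const μ).div_const √v)).congr_deriv ?_
    rw [mul_one_div, id, stdGaussPDF_div_sqrt]
  have hlim : Tendsto (fun y => stdGaussCDF ((y - μ) / √v)) atTop (𝓝 1) := by
    rw [stdGaussCDF_eq_cdf]
    exact (tendsto_cdf_atTop _).comp
      ((tendsto_atTop_add_const_right _ (-μ) tendsto_id).atTop_div_const (by positivity))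
  exact integral_Ioi_of_hasDerivAt_of_tendsto' (fun y _ => hderiv y)
    (integrable_gaussianPDFReal μ v).integrableOn hlim

lemma integral_Ioi_mul_gaussianPDFReal (μ : ℝ) {v : ℝ≥0} (hv : v ≠ 0) (b : ℝ) :
    ∫ y in Ioi b, y * gaussianPDFReal μ v y =
      μ * (1 - stdGaussCDF ((b - μ) / √v)) + v * gaussianPDFReal μ v b := by
  have h0 : Integrable (gaussianPDFReal μ v) := integrable_gaussianPDFReal μ v
  have h1 : Integrable fun y => y * gaussianPDFReal μ v y := by
    simpa using integrable_pow_mul_gaussianPDFReal μ v 1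
  have hcentred : Integrable fun y => (y - μ) * gaussianPDFReal μ v y := by
    simp_rw [sub_mul]
    exact h1.sub (h0.const_mul μ)
  have hStein := integral_Ioi_gaussianPDFReal_stein μ hv (a := b)
    (fun y _ => hasDerivAt_const y (1 : ℝ)) (by simpa using h0.integrableOn)
    (by simpa using hcentred.integrableOn) (by simp)
  simp only [mul_one, one_mul, zero_mul, integral_zero, add_zero, sub_mul] at hStein
  rw [integral_sub h1.integrableOn (h0.const_mul μ).integrableOn, integral_const_mul,
    integral_Ioi_gaussianPDFReal μ hv] at hStein
  linarith

/-- The conditional survival function `x ↦ P(Y > b | X = x)` of the linear Gaussian model in which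
`Y` has law `N(c x, v)` given `X = x`, where `v ≠ 0` (at `v = 0` the division by zero makes it
constant). For `X` of law `N(0, w)`, the joint density of `(X, Y)` is
`gaussianPDFReal 0 w x * gaussianPDFReal (c * x) v y`. -/
noncomputable def linearGaussianTail (c : ℝ) (v : ℝ≥0) (b x : ℝ) : ℝ :=
  1 - stdGaussCDF ((b - c * x) / √v)

section LinearGaussian

variable (c : ℝ) (v : ℝ≥0) (b : ℝ)

lemma hasDerivAt_linearGaussianTail (x : ℝ) :
    HasDerivAt (linearGaussianTail c v b) (c * gaussianPDFReal (c * x) v b) x := by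
  refine (((hasDerivAt_stdGaussCDF _).comp x
    ((((hasDerivAt_id x).const_mul c).const_sub b).div_const √v)).const_sub 1).congr_deriv ?_
  rw [← stdGaussPDF_div_sqrt, id]
  ring

lemma norm_linearGaussianTail_le_one (x : ℝ) : ‖linearGaussianTail c v b x‖ ≤ 1 := by
  rw [linearGaussianTail, stdGaussCDF_eq_cdf, norm_of_nonneg (sub_nonneg.mpr (cdf_le_one _ _))]
  exact sub_le_self 1 (cdf_nonneg _ _)

lemma integrable_pow_mul_gaussianPDFReal_mul_linearGaussianTail (μ : ℝ) (w : ℝ≥0) (n : ℕ) :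
    Integrable fun x => x ^ n * gaussianPDFReal μ w x * linearGaussianTail c v b x := by
  have hcont : Continuous (linearGaussianTail c v b) :=
    continuous_iff_continuousAt.mpr fun x => (hasDerivAt_linearGaussianTail c v b x).continuousAt
  exact (integrable_pow_mul_gaussianPDFReal μ w n).mul_bdd hcont.aestronglyMeasurable
    (ae_of_all _ (norm_linearGaussianTail_le_one c v b))

lemma integrable_pow_mul_gaussianPDFReal_mul_gaussianPDFReal (μ : ℝ) (w : ℝ≥0) (n : ℕ) :
    Integrable fun x => x ^ n * (gaussianPDFReal μ w x * gaussianPDFReal (c * x) v b) := by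
  have hmeas : Measurable fun x => gaussianPDFReal (c * x) v b := by fun_prop
  simp_rw [← mul_assoc]
  refine (integrable_pow_mul_gaussianPDFReal μ w n).mul_bdd (c := (√(2 * π * v))⁻¹)
    hmeas.aestronglyMeasurable (ae_of_all _ fun x => ?_)
  rw [norm_of_nonneg (gaussianPDFReal_nonneg _ _ _)]
  exact gaussianPDFReal_le _ _ _

variable {v}

lemma integral_Ioi_gaussianPDFReal_eq_linearGaussianTail (hv : v ≠ 0) (x : ℝ) :
    ∫ y in Ioi b, gaussianPDFReal (c * x) v y = linearGaussianTail c v b x :=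
  integral_Ioi_gaussianPDFReal (c * x) hv b

variable {w : ℝ≥0}

lemma integral_Ioi_sq_mul_gaussianPDFReal_mul_linearGaussianTail (hw : w ≠ 0) (a : ℝ) :
    ∫ x in Ioi a, x ^ 2 * gaussianPDFReal 0 w x * linearGaussianTail c v b x =
      w * (a * gaussianPDFReal 0 w a * linearGaussianTail c v b a +
        (∫ x in Ioi a, gaussianPDFReal 0 w x * linearGaussianTail c v b x) +
        c * ∫ x in Ioi a, x * (gaussianPDFReal 0 w x * gaussianPDFReal (c * x) v b)) := by
  have htail := integrable_pow_mul_gaussianPDFReal_mul_linearGaussianTail c v b 0 w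
  have hdensity :=
    (integrable_pow_mul_gaussianPDFReal_mul_gaussianPDFReal c v b 0 w 1).const_mul c
  have hderiv (x : ℝ) : HasDerivAt (fun x => x * linearGaussianTail c v b x)
      (linearGaussianTail c v b x + x * (c * gaussianPDFReal (c * x) v b)) x :=
    ((hasDerivAt_id x).mul (hasDerivAt_linearGaussianTail c v b x)).congr_deriv (by simp)
  have hderiv_mul (x : ℝ) :
      (linearGaussianTail c v b x + x * (c * gaussianPDFReal (c * x) v b)) *
          gaussianPDFReal 0 w x =
        x ^ 0 * gaussianPDFReal 0 w x * linearGaussianTail c v b x +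
          c * (x ^ 1 * (gaussianPDFReal 0 w x * gaussianPDFReal (c * x) v b)) := by
    ring
  have hStein := integral_Ioi_gaussianPDFReal_stein 0 hw (a := a) (fun x _ => hderiv x)
    ((htail 1).congr (ae_of_all _ fun x => by ring)).integrableOn
    ((htail 2).congr (ae_of_all _ fun x => by ring)).integrableOn
    (by simp_rw [hderiv_mul]; exact ((htail 0).add hdensity).integrableOn)
  simp_rw [hderiv_mul] at hStein
  rw [integral_add (htail 0).integrableOn hdensity.integrableOn, integral_const_mul] at hStein
  simp only [pow_zero, one_mul, pow_one] at hStein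
  convert hStein using 1
  · congr 1 with x
    ring
  · ring

lemma integral_Ioi_Ioi_mul_mul_linearGaussian (hv : v ≠ 0) (hw : w ≠ 0) (a : ℝ) :
    ∫ x in Ioi a, ∫ y in Ioi b,
        x * y * (gaussianPDFReal 0 w x * gaussianPDFReal (c * x) v y) =
      c * w * (a * gaussianPDFReal 0 w a * linearGaussianTail c v b a +
        ∫ x in Ioi a, ∫ y in Ioi b, gaussianPDFReal 0 w x * gaussianPDFReal (c * x) v y) +
      (c ^ 2 * w + v) *
        ∫ x in Ioi a, x * (gaussianPDFReal 0 w x * gaussianPDFReal (c * x) v b) := by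
  have hinner (x : ℝ) :
      ∫ y in Ioi b, x * y * (gaussianPDFReal 0 w x * gaussianPDFReal (c * x) v y) =
        c * (x ^ 2 * gaussianPDFReal 0 w x * linearGaussianTail c v b x) +
          v * (x ^ 1 * (gaussianPDFReal 0 w x * gaussianPDFReal (c * x) v b)) := by
    have hfactor (y : ℝ) : x * y * (gaussianPDFReal 0 w x * gaussianPDFReal (c * x) v y) =
        x * gaussianPDFReal 0 w x * (y * gaussianPDFReal (c * x) v y) := by
      ring
    simp_rw [hfactor]
    rw [integral_const_mul, integral_Ioi_mul_gaussianPDFReal _ hv, linearGaussianTail]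
    ring
  have htail :=
    (integrable_pow_mul_gaussianPDFReal_mul_linearGaussianTail c v b 0 w 2).const_mul c
  have hdensity :=
    (integrable_pow_mul_gaussianPDFReal_mul_gaussianPDFReal c v b 0 w 1).const_mul (v : ℝ)
  simp_rw [hinner, integral_const_mul, integral_Ioi_gaussianPDFReal_eq_linearGaussianTail c b hv]
  rw [integral_add htail.integrableOn hdensity.integrableOn, integral_const_mul,
    integral_const_mul, integral_Ioi_sq_mul_gaussianPDFReal_mul_linearGaussianTail c b hw]
  simp only [pow_one]
  ring

end LinearGaussian

lemma bivGaussPDF_comm (ρ x y : ℝ) : bivGaussPDF ρ x y = bivGaussPDF ρ y x := by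
  unfold bivGaussPDF
  congr 3
  ring

lemma bivGaussPDF_eq_mul {ρ : ℝ} {v : ℝ≥0} (hv : v ≠ 0) (hvρ : (v : ℝ) = 1 - ρ ^ 2) (x y : ℝ) :
    bivGaussPDF ρ x y = gaussianPDFReal 0 1 x * gaussianPDFReal (ρ * x) v y := by
  have hv' : (v : ℝ) ≠ 0 := NNReal.coe_ne_zero.mpr hv
  have hexponent : -(x ^ 2 - 2 * ρ * x * y + y ^ 2) / (2 * v) =
      -(x - 0) ^ 2 / (2 * (1 : ℝ≥0)) + -(y - ρ * x) ^ 2 / (2 * v) := by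
    rw [NNReal.coe_one]
    field_simp
    rw [hvρ]
    ring
  have hconst : 1 / (2 * π * √v) = (√(2 * π * (1 : ℝ≥0)))⁻¹ * (√(2 * π * v))⁻¹ := by
    rw [NNReal.coe_one, mul_one, sqrt_mul (by positivity) (v : ℝ), ← mul_inv, ← mul_assoc,
      mul_self_sqrt (by positivity), one_div]
  rw [bivGaussPDF, gaussianPDFReal, gaussianPDFReal, ← hvρ, hexponent, hconst, exp_add]
  ring

lemma integral_Ioi_mul_bivGaussPDF {ρ : ℝ} {v : ℝ≥0} (hv : v ≠ 0) (hvρ : (v : ℝ) = 1 - ρ ^ 2)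
    (a b : ℝ) :
    ∫ x in Ioi a, x * bivGaussPDF ρ x b =
      ρ * b * stdGaussPDF b * (1 - stdGaussCDF ((a - ρ * b) / √v)) + v * bivGaussPDF ρ a b := by
  simp_rw [bivGaussPDF_comm ρ _ b, bivGaussPDF_eq_mul hv hvρ b,
    mul_left_comm _ (gaussianPDFReal 0 1 b)]
  rw [integral_const_mul, integral_Ioi_mul_gaussianPDFReal _ hv, stdGaussPDF_eq_gaussianPDFReal]
  ring

/-- The cross-moment formula of Theorem 1 of the paper: for a standardized bivariate
Gaussian pair with correlation `ρ ∈ (−1,1)` truncated to `[a,∞) × [b,∞)`,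
`∫_a^∞ ∫_b^∞ z₁z₂ f_ρ(z₁,z₂) = ρ·(aφ(a)(1−Φ(A)) + bφ(b)(1−Φ(B)) + Ω_{a,b}) + (1−ρ²)f_ρ(a,b)`. -/
theorem bivariate_gaussian_truncated_cross_moment_std
    (ρ : ℝ) (hρ : ρ ∈ Set.Ioo (-1 : ℝ) 1) (a b : ℝ)
    (A B Omega : ℝ)
    (hA : A = (b - ρ * a) / Real.sqrt (1 - ρ ^ 2))
    (hB : B = (a - ρ * b) / Real.sqrt (1 - ρ ^ 2))
    (hOmega : Omega = ∫ z₁ in Set.Ioi a, ∫ z₂ in Set.Ioi b, bivGaussPDF ρ z₁ z₂) :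
    (∫ z₁ in Set.Ioi a, ∫ z₂ in Set.Ioi b, z₁ * z₂ * bivGaussPDF ρ z₁ z₂)
      = ρ * (a * stdGaussPDF a * (1 - stdGaussCDF A)
            + b * stdGaussPDF b * (1 - stdGaussCDF B) + Omega)
        + (1 - ρ ^ 2) * bivGaussPDF ρ a b := by
  have hpos : 0 < 1 - ρ ^ 2 := by nlinarith [hρ.1, hρ.2]
  obtain ⟨v, hvρ⟩ : ∃ v : ℝ≥0, (v : ℝ) = 1 - ρ ^ 2 := ⟨⟨1 - ρ ^ 2, hpos.le⟩, rfl⟩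
  have hv : v ≠ 0 := NNReal.coe_ne_zero.mp (hvρ ▸ hpos.ne')
  have hmoment := integral_Ioi_mul_bivGaussPDF hv hvρ a b
  have hcross := integral_Ioi_Ioi_mul_mul_linearGaussian ρ b hv one_ne_zero a
  simp only [← bivGaussPDF_eq_mul hv hvρ] at hcross
  simp only [← stdGaussPDF_eq_gaussianPDFReal, linearGaussianTail, NNReal.coe_one] at hcross
  rw [hcross, hmoment, hA, hB, hOmega, hvρ]
  ring
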